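/- Let R be a commutative ring, M an n×n matrix over R, and write det(1 - t·M) = 1 + a₁t + a₂t² + ⋯ (so a_j is the j-th coefficient of the reversed characteristic polynomial, with a₀ = 1). Then for every k > 0 the identity k·a_k + tr(M)·a_{k-1} + tr(M²)·a_{k-2} + ⋯ + tr(M^{k-1})·a₁ + tr(M^k) = 0 holds in R. -/

import Mathlib

/-!
Let `P = det (1 - X M)`. Jacobi's formula for the derivative of a determinant gives
`P' = -tr (adj (1 - X M) M)`. Over `R⟦X⟧` the matrix `1 - X M` is inverted by the geometric series
`∑ Xᵏ Mᵏ`, so its adjugate is `P ∑ Xᵏ Mᵏ` and `P' = -(∑ tr (Mᵏ⁺¹) Xᵏ) P`. Comparing coefficients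
gives the recursion with no division by integers, hence over every commutative ring.
-/

open Finset Matrix
open scoped PowerSeries

section Jacobi

variable {R A E n : Type*}

theorem derivation_prod [CommSemiring R] [CommSemiring A] [AddCommMonoid E] [Algebra R A]
    [Module A E] [Module R E] {ι : Type*} [DecidableEq ι] (D : Derivation R A E)
    (s : Finset ι) (f : ι → A) :
    D (∏ i ∈ s, f i) = ∑ i ∈ s, (∏ j ∈ s.erase i, f j) • D (f i) := by
  induction s using Finset.induction_on with
  | empty => simp
  | insert a s ha ih =>
    have erase_insert_of_mem {i : ι} (hi : i ∈ s) :
        ∏ j ∈ (insert a s).erase i, f j = f a * ∏ j ∈ s.erase i, f j := by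
      rw [erase_insert_of_ne (ne_of_mem_of_not_mem hi ha).symm,
        prod_insert fun hmem ↦ ha (mem_of_mem_erase hmem)]
    rw [prod_insert ha, D.leibniz, ih, sum_insert ha, erase_insert ha, smul_sum, add_comm]
    congr 1
    exact sum_congr rfl fun i hi ↦ by rw [erase_insert_of_mem hi, mul_smul]

variable [CommSemiring R] [CommRing A] [Algebra R A] [Fintype n] [DecidableEq n]

theorem adjugate_apply_eq_det_updateCol (M : Matrix n n A) (i j : n) :
    M.adjugate i j = (M.updateCol i (Pi.single j 1)).det := by
  rw [← cramer_apply, cramer_eq_adjugate_mulVec, mulVec_single_one, col_apply]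

theorem adjugate_apply_eq_sum_perm (M : Matrix n n A) (i j : n) :
    M.adjugate i j =
      ∑ σ : Equiv.Perm n with σ i = j, Equiv.Perm.sign σ • ∏ k ∈ univ.erase i, M (σ k) k := by
  rw [adjugate_apply_eq_det_updateCol, det_apply, sum_filter]
  refine sum_congr rfl fun σ _ ↦ ?_
  have prod_erase_updateCol : ∏ k ∈ univ.erase i, M.updateCol i (Pi.single j 1) (σ k) k =
      ∏ k ∈ univ.erase i, M (σ k) k :=
    prod_congr rfl fun k hk ↦ updateCol_ne (ne_of_mem_erase hk)
  rw [← mul_prod_erase univ _ (mem_univ i), prod_erase_updateCol, updateCol_self, Pi.single_apply]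
  split_ifs <;> simp

theorem derivation_det [AddCommGroup E] [Module A E] [Module R E] (D : Derivation R A E)
    (M : Matrix n n A) : D M.det = ∑ i, ∑ j, M.adjugate j i • D (M i j) := by
  calc D M.det
    _ = ∑ σ : Equiv.Perm n, ∑ j,
          (Equiv.Perm.sign σ • ∏ k ∈ univ.erase j, M (σ k) k) • D (M (σ j) j) := by
      simp only [det_apply, map_sum, Units.smul_def, map_zsmul, derivation_prod, smul_sum,
        smul_assoc]
    _ = ∑ j, ∑ i, ∑ σ : Equiv.Perm n with σ j = i,
          (Equiv.Perm.sign σ • ∏ k ∈ univ.erase j, M (σ k) k) • D (M (σ j) j) := by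
      rw [sum_comm]
      exact sum_congr rfl fun j _ ↦ (sum_fiberwise univ (fun σ : Equiv.Perm n ↦ σ j) _).symm
    _ = ∑ j, ∑ i, M.adjugate j i • D (M i j) := by
      refine sum_congr rfl fun j _ ↦ sum_congr rfl fun i _ ↦ ?_
      rw [adjugate_apply_eq_sum_perm, sum_smul]
      exact sum_congr rfl fun σ hσ ↦ by rw [(mem_filter.mp hσ).2]
    _ = ∑ i, ∑ j, M.adjugate j i • D (M i j) := sum_comm

theorem derivation_det_eq_trace (D : Derivation R A A) (M : Matrix n n A) :
    D M.det = (M.adjugate * M.map D).trace := by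
  rw [derivation_det, sum_comm]
  simp only [trace, diag_apply, mul_apply, map_apply, smul_eq_mul]

end Jacobi

theorem adjugate_eq_det_smul_of_mul_eq_one {A n : Type*} [CommRing A] [Fintype n] [DecidableEq n]
    {M N : Matrix n n A} (h : M * N = 1) : M.adjugate = M.det • N := by
  rw [← mul_one M.adjugate, ← h, ← mul_assoc, adjugate_mul, smul_mul, one_mul]

section GeometricSeries

variable {R n : Type*} [Fintype n] [DecidableEq n]

section Semiring

variable [Semiring R]

/-- The geometric series `∑ Xᵏ Mᵏ` of a square matrix `M`, the inverse of `1 - X M`; it is encoded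
as a matrix of power series, so that determinants and adjugates apply to it. -/
noncomputable def matrixGeomSeries (M : Matrix n n R) : Matrix n n R⟦X⟧ :=
  of fun i j ↦ PowerSeries.mk fun k ↦ (M ^ k) i j

theorem matrixGeomSeries_mul_map_C (M : Matrix n n R) :
    matrixGeomSeries M * M.map PowerSeries.C =
      of fun i j ↦ PowerSeries.mk fun k ↦ (M ^ (k + 1)) i j := by
  ext i j k
  simp [matrixGeomSeries, mul_apply, pow_succ]

theorem map_C_mul_matrixGeomSeries (M : Matrix n n R) :
    M.map PowerSeries.C * matrixGeomSeries M =
      of fun i j ↦ PowerSeries.mk fun k ↦ (M ^ (k + 1)) i j := by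
  ext i j k
  simp [matrixGeomSeries, mul_apply, pow_succ']

theorem trace_matrixGeomSeries_mul_map_C (M : Matrix n n R) :
    (matrixGeomSeries M * M.map PowerSeries.C).trace =
      PowerSeries.mk fun k ↦ (M ^ (k + 1)).trace := by
  ext k
  simp [matrixGeomSeries_mul_map_C, trace]

end Semiring

theorem one_sub_X_smul_mul_matrixGeomSeries [Ring R] (M : Matrix n n R) :
    (1 - (PowerSeries.X : R⟦X⟧) • M.map PowerSeries.C) * matrixGeomSeries M = 1 := by
  rw [sub_mul, one_mul, smul_mul, map_C_mul_matrixGeomSeries, sub_eq_iff_eq_add]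
  ext i j (_ | k)
  · by_cases h : i = j <;> simp [matrixGeomSeries, h]
  · by_cases h : i = j <;> simp [matrixGeomSeries, h, PowerSeries.coeff_succ_X_mul]

end GeometricSeries

section CharpolyRev

variable {R n : Type*} [CommRing R] [Fintype n] [DecidableEq n]

theorem coe_charpolyRev (M : Matrix n n R) :
    (M.charpolyRev : R⟦X⟧) = (1 - (PowerSeries.X : R⟦X⟧) • M.map PowerSeries.C).det := by
  rw [charpolyRev, ← Polynomial.coeToPowerSeries.ringHom_apply, RingHom.map_det]
  congr 1
  ext i j : 1
  by_cases h : i = j <;> simp [h, PowerSeries.X_mul]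

theorem derivative_coe_charpolyRev (M : Matrix n n R) :
    d⁄dX R (M.charpolyRev : R⟦X⟧) =
      -(PowerSeries.mk (fun k ↦ (M ^ (k + 1)).trace) * M.charpolyRev) := by
  set N := 1 - (PowerSeries.X : R⟦X⟧) • M.map PowerSeries.C with hN
  have map_derivative_N : N.map (d⁄dX R) = -M.map PowerSeries.C := by
    ext i j : 1
    by_cases h : i = j <;> simp [hN, h]
  have adjugate_N : N.adjugate = N.det • matrixGeomSeries M :=
    adjugate_eq_det_smul_of_mul_eq_one (one_sub_X_smul_mul_matrixGeomSeries M)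
  rw [coe_charpolyRev, derivation_det_eq_trace, map_derivative_N, adjugate_N, mul_neg, smul_mul,
    trace_neg, trace_smul, trace_matrixGeomSeries_mul_map_C, smul_eq_mul, mul_comm]

theorem succ_nsmul_coeff_charpolyRev (M : Matrix n n R) (k : ℕ) :
    (k + 1) • M.charpolyRev.coeff (k + 1) =
      -∑ i ∈ range (k + 1), (M ^ (i + 1)).trace * M.charpolyRev.coeff (k - i) := by
  have coeff_eq := congrArg (PowerSeries.coeff k) (derivative_coe_charpolyRev M)
  rw [PowerSeries.coeff_derivative, map_neg, PowerSeries.coeff_mul,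
    Nat.sum_antidiagonal_eq_sum_range_succ_mk] at coeff_eq
  simp only [Polynomial.coeff_coe, PowerSeries.coeff_mk] at coeff_eq
  rw [nsmul_eq_mul', Nat.cast_succ, coeff_eq]

end CharpolyRev

theorem trace_coeff_recursion_general {R n : Type*} [CommRing R] [Fintype n] [DecidableEq n]
    (M : Matrix n n R) {k : ℕ} (hk : 0 < k) :
    k • M.charpolyRev.coeff k +
      (∑ i ∈ Icc 1 (k - 1), (M ^ i).trace * M.charpolyRev.coeff (k - i)) + (M ^ k).trace = 0 := by
  obtain ⟨m, rfl⟩ := Nat.exists_eq_add_one.mpr hk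
  have coeff_zero : M.charpolyRev.coeff 0 = 1 := by
    rw [Polynomial.coeff_zero_eq_eval_zero, eval_charpolyRev]
  have sum_Icc_eq_sum_range :
      ∑ i ∈ Icc 1 m, (M ^ i).trace * M.charpolyRev.coeff (m + 1 - i) =
        ∑ i ∈ range m, (M ^ (i + 1)).trace * M.charpolyRev.coeff (m - i) := by
    rw [range_eq_Ico, ← Ico_add_one_right_eq_Icc, ← zero_add 1, ← sum_Ico_add']
    simp only [zero_add, Nat.add_sub_add_right]
  rw [Nat.add_sub_cancel, succ_nsmul_coeff_charpolyRev, sum_range_succ,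
    Nat.sub_self, coeff_zero, mul_one, sum_Icc_eq_sum_range, add_assoc, neg_add_cancel]

/-- Newton-type recursion relating the coefficients of the reversed characteristic
polynomial `det(1 - t·M) = 1 + a₁ t + a₂ t² + ⋯` to the traces of powers of `M`:
for every `k > 0`,
`k·a_k + tr(M)·a_{k-1} + tr(M²)·a_{k-2} + ⋯ + tr(M^{k-1})·a₁ + tr(M^k) = 0`. -/
theorem trace_coeff_recursion (R : Type*) [CommRing R] (n : ℕ)
    (M : Matrix (Fin n) (Fin n) R) (a : ℕ → R)
    (ha : ∀ j, a j = ((1 - (Polynomial.X : Polynomial R) • M.map Polynomial.C).det).coeff j)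
    (k : ℕ) (hk : 0 < k) :
    k • a k + (∑ i ∈ Finset.Icc 1 (k - 1), (M ^ i).trace * a (k - i)) + (M ^ k).trace = 0 := by
  simp only [ha]
  exact trace_coeff_recursion_general M hk
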